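/- arXiv:1308.2905 — 2 statements merged into one kernel-verified Lean document; each statement's English description precedes it below -/
import Mathlib

section
/- Fix r ∈ ℚ∩(0,1), and let r_n be the sequence of Farey mediants approaching r from below defined by r_0 a Farey neighbour of r with r_0 < r and r_n = mediant of r and r_{n-1}. Then s(r_n) = s(r)^n s(r_0) and t(r_n) = t(r) s(r)^{n-1} s(r_0) for n ≥ 1; consequently the infinite words s(r_n)^∞ converge coordinatewise to s(r)^∞ and t(r_n)^∞ converge to t(r) s(r)^∞. -/
/-- `u` is a (contiguous) factor of `w`. -/
def IsFactor (u w : List Bool) : Prop := ∃ l r : List Bool, w = l ++ u ++ r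

/-- A binary word is balanced: any two factors of equal length have numbers of
`true`s (ones) differing by at most 1. -/
def BalancedW (w : List Bool) : Prop :=
  ∀ u v : List Bool, IsFactor u w → IsFactor v w → u.length = v.length →
    (u.count true : ℤ) - (v.count true : ℤ) ≤ 1

/-- A word is cyclically balanced if all its cyclic rotations are balanced. -/
def CyclBalanced (w : List Bool) : Prop := ∀ k : ℕ, BalancedW (w.rotate k)

/-- Lexicographic `≤` on finite binary words (`false < true`). -/
def WordLe (u v : List Bool) : Prop := u = v ∨ List.Lex (· < ·) u v

/-- `w = s(p/q)`: the lexicographically largest cyclically balanced word of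
length `q` with `p` ones beginning with `0`. -/
def IsSWord (p q : ℕ) (w : List Bool) : Prop :=
  w.length = q ∧ w.count true = p ∧ CyclBalanced w ∧ w.head? = some false ∧
  ∀ w' : List Bool, w'.length = q → w'.count true = p → CyclBalanced w' →
    w'.head? = some false → WordLe w' w

/-- `w = t(p/q)`: the lexicographically smallest cyclically balanced word of
length `q` with `p` ones beginning with `1`. -/
def IsTWord (p q : ℕ) (w : List Bool) : Prop :=
  w.length = q ∧ w.count true = p ∧ CyclBalanced w ∧ w.head? = some true ∧
  ∀ w' : List Bool, w'.length = q → w'.count true = p → CyclBalanced w' →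
    w'.head? = some true → WordLe w w'

/-- The infinite periodic word `w^∞`. -/
def periodize (w : List Bool) (j : ℕ) : Bool := w.getD (j % w.length) false

/-- The infinite word `u v^∞`. -/
def wordThenPeriodic (u v : List Bool) (j : ℕ) : Bool :=
  if j < u.length then u.getD j false else periodize v (j - u.length)

/-!
Let `F i` be the number of ones among the first `i` letters of `w^∞`, where `w` has length `q` and
`p` ones. If `w` is cyclically balanced, then `F` is quasi-additive, `|F (d + l) - F d - F l| ≤ 1`;
summing this along the multiples of `l` up to `q l`, where `F (q l) = l p`, gives
`|q F l - l p| < q`. So every cyclic window of length `l` has between `⌊l p / q⌋` and `⌈l p / q⌉`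
ones, and suitable mechanical words attain the upper, respectively the lower, bound for all windows
starting at the second letter: for `k < q`, `s` is characterised by `F (k + 1) = ⌈k p / q⌉` and `t`
by `F (k + 1) = ⌊k p / q⌋ + 1`. In particular `s = 01v` and `t = 10v` with the same `v`.

For Farey neighbours `p0 / q0 < p / q` the ceilings `⌈k p0 / q0⌉` and `⌈k p / q⌉` agree when
`k < q0`. Applied to the pairs `(r_0, r)` and `(r_1, r)`, where `r_1` is the mediant, this gives
`s(r_1) = s(r) s(r_0)`, and exchanging the first two letters gives `t(r_1) = t(r) s(r_0)`.
Iterating over `n` yields the theorem.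
-/

/-- The number of ones among the first `i` letters of the infinite word `w^∞`. -/
def prefixOnes (w : List Bool) (i : ℕ) : ℕ := Nat.count (periodize w · = true) i

section Periodize

variable {u v w : List Bool} {j n : ℕ}

theorem periodize_of_lt (hj : j < w.length) : periodize w j = w[j] := by
  rw [periodize, Nat.mod_eq_of_lt hj, List.getD_eq_getElem]

theorem periodize_add_length (w : List Bool) (j : ℕ) :
    periodize w (j + w.length) = periodize w j := by
  simp [periodize]

theorem periodize_rotate (w : List Bool) (a j : ℕ) :
    periodize (w.rotate a) j = periodize w (a + j) := by
  rcases Nat.eq_zero_or_pos w.length with h | h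
  · simp [List.length_eq_zero_iff.1 h, periodize]
  · rw [periodize, periodize, List.length_rotate,
      List.getD_eq_getElem _ _ (by simpa using Nat.mod_lt _ h),
      List.getD_eq_getElem _ _ (Nat.mod_lt _ h), List.getElem_rotate]
    simp [add_comm]

theorem periodize_append_left (hj : j < u.length) :
    periodize (u ++ v) j = periodize u j := by
  rw [periodize_of_lt hj, periodize_of_lt (by simp; omega), List.getElem_append_left hj]

theorem periodize_append_right (hj : j < v.length) :
    periodize (u ++ v) (u.length + j) = periodize v j := by
  rw [periodize_of_lt hj, periodize_of_lt (by simpa using hj),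
    List.getElem_append_right (Nat.le_add_right _ _)]
  simp

theorem periodize_flatten_replicate (hj : j < n * w.length) :
    periodize (List.replicate n w).flatten j = periodize w j := by
  induction n generalizing j with
  | zero => simp at hj
  | succ n ih =>
    rw [List.replicate_succ, List.flatten_cons]
    rcases lt_or_ge j w.length with h | h
    · exact periodize_append_left h
    · obtain ⟨j, rfl⟩ := Nat.exists_eq_add_of_le h
      have hj' : j < n * w.length := by linarith
      rw [periodize_append_right (by simpa using hj'), ih hj', add_comm, periodize_add_length]

theorem periodize_append_eq_wordThenPeriodic (hj : j < u.length + v.length) :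
    periodize (u ++ v) j = wordThenPeriodic u v j := by
  unfold wordThenPeriodic
  split_ifs with h
  · rw [periodize_append_left h, periodize_of_lt h, List.getD_eq_getElem]
  · obtain ⟨j, rfl⟩ := Nat.exists_eq_add_of_le (not_lt.1 h)
    rw [periodize_append_right (by omega), Nat.add_sub_cancel_left]

theorem periodize_flatten_replicate_append (hj : j < n * w.length) :
    periodize ((List.replicate n w).flatten ++ v) j = periodize w j := by
  rw [periodize_append_left (by simpa using hj), periodize_flatten_replicate hj]

theorem periodize_append_flatten_replicate_append (hj : j < u.length + n * w.length) :
    periodize (u ++ (List.replicate n w).flatten ++ v) j = wordThenPeriodic u w j := by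
  rw [periodize_append_left (by simpa using hj),
    periodize_append_eq_wordThenPeriodic (by simpa using hj), wordThenPeriodic, wordThenPeriodic]
  split_ifs with h
  · rfl
  · exact periodize_flatten_replicate (by omega)

end Periodize

section PrefixOnes

variable {u v w : List Bool} {i : ℕ}

@[simp]
theorem prefixOnes_zero (w : List Bool) : prefixOnes w 0 = 0 :=
  Nat.count_zero _

theorem prefixOnes_eq_count_take (hi : i ≤ w.length) :
    prefixOnes w i = (w.take i).count true := by
  induction i with
  | zero => simp
  | succ i ih =>
    rw [prefixOnes, Nat.count_succ, ← prefixOnes, ih (by omega), periodize_of_lt hi,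
      List.take_succ_eq_append_getElem hi, List.count_append]
    simp [List.count_singleton]

theorem prefixOnes_length (w : List Bool) : prefixOnes w w.length = w.count true := by
  rw [prefixOnes_eq_count_take le_rfl, List.take_length]

theorem prefixOnes_add (w : List Bool) (a l : ℕ) :
    prefixOnes w (a + l) = prefixOnes w a + prefixOnes (w.rotate a) l := by
  simp only [prefixOnes, periodize_rotate, Nat.count_add]

theorem prefixOnes_add_length (w : List Bool) (i : ℕ) :
    prefixOnes w (i + w.length) = prefixOnes w i + w.count true := by
  rw [← prefixOnes_length, prefixOnes, Nat.count_add']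
  simp only [periodize_add_length, prefixOnes]

theorem prefixOnes_add_mul_length (w : List Bool) (i k : ℕ) :
    prefixOnes w (i + k * w.length) = prefixOnes w i + k * w.count true := by
  induction k with
  | zero => simp
  | succ k ih => rw [add_mul, one_mul, ← add_assoc, prefixOnes_add_length, ih]; ring

theorem prefixOnes_append_left (hi : i ≤ u.length) :
    prefixOnes (u ++ v) i = prefixOnes u i := by
  rw [prefixOnes_eq_count_take hi, prefixOnes_eq_count_take (by simp; omega),
    List.take_append_of_le_length hi]

theorem prefixOnes_append_right (hi : i ≤ v.length) :
    prefixOnes (u ++ v) (u.length + i) = u.count true + prefixOnes v i := by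
  rw [prefixOnes_eq_count_take hi, prefixOnes_eq_count_take (by simpa using hi),
    List.take_length_add_append, List.count_append]

theorem prefixOnes_one_of_head? {b : Bool} (h : w.head? = some b) :
    prefixOnes w 1 = b.toNat := by
  obtain ⟨w, rfl⟩ := List.head?_eq_some_iff.1 h
  cases b <;> simp [prefixOnes_eq_count_take]

theorem head?_of_prefixOnes_one {b : Bool} (hw : 0 < w.length)
    (h : prefixOnes w 1 = b.toNat) : w.head? = some b := by
  obtain ⟨a, w, rfl⟩ := List.exists_cons_of_length_pos hw
  have : a.toNat = b.toNat := by rw [← h, prefixOnes_one_of_head? rfl]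
  cases a <;> cases b <;> simp_all

end PrefixOnes

section WordLe

variable {u v : List Bool}

theorem WordLe.antisymm (huv : WordLe u v) (hvu : WordLe v u) : u = v := by
  rcases huv with huv | huv
  · exact huv
  rcases hvu with hvu | hvu
  · exact hvu.symm
  · exact absurd (show v < u from hvu) (lt_asymm (show u < v from huv))

theorem wordLe_of_count_take_le (hlen : u.length = v.length)
    (h : ∀ i ≤ u.length, (u.take i).count true ≤ (v.take i).count true) : WordLe u v := by
  induction u generalizing v with
  | nil => exact Or.inl (List.length_eq_zero_iff.1 hlen.symm).symm
  | cons a u ih =>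
    obtain ⟨b, v, rfl⟩ := List.exists_cons_of_length_eq_add_one hlen.symm
    have hhead : a.toNat ≤ b.toNat := by
      simpa [List.count_singleton, Bool.toNat, Bool.cond_eq_ite] using h 1 (by simp)
    by_cases hab : a = b
    · subst hab
      have htail : WordLe u v := ih (by simpa using hlen) fun i hi => by
        simpa [List.count_cons] using h (i + 1) (by simpa using hi)
      exact htail.imp (congrArg _) List.Lex.cons
    · exact Or.inr (List.Lex.rel (by cases a <;> cases b <;> simp_all))

theorem wordLe_of_prefixOnes_le (hlen : u.length = v.length)
    (h : ∀ i ≤ u.length, prefixOnes u i ≤ prefixOnes v i) : WordLe u v :=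
  wordLe_of_count_take_le hlen fun i hi => by
    rw [← prefixOnes_eq_count_take hi, ← prefixOnes_eq_count_take (hlen ▸ hi)]
    exact h i hi

theorem eq_of_prefixOnes_eq (hlen : u.length = v.length)
    (h : ∀ i ≤ u.length, prefixOnes u i = prefixOnes v i) : u = v :=
  (wordLe_of_prefixOnes_le hlen fun i hi => (h i hi).le).antisymm
    (wordLe_of_prefixOnes_le hlen.symm fun i hi => (h i (hlen ▸ hi)).ge)

end WordLe

section CyclBalanced

variable {w : List Bool}

theorem BalancedW.abs_prefixOnes_add_sub_sub_le {d l : ℕ} (hw : BalancedW w)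
    (h : d + l ≤ w.length) :
    |(prefixOnes w (d + l) : ℤ) - prefixOnes w d - prefixOnes w l| ≤ 1 := by
  have hu : IsFactor (w.take l) w := ⟨[], w.drop l, by simp⟩
  have hv : IsFactor ((w.drop d).take l) w :=
    ⟨w.take d, (w.drop d).drop l, by
      rw [List.append_assoc, List.take_append_drop, List.take_append_drop]⟩
  have hlen : (w.take l).length = ((w.drop d).take l).length := by
    simp only [List.length_take, List.length_drop]; omega
  have huv := hw _ _ hu hv hlen
  have hvu := hw _ _ hv hu hlen.symm
  rw [prefixOnes_eq_count_take h, prefixOnes_eq_count_take (show d ≤ _ by omega),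
    prefixOnes_eq_count_take (show l ≤ _ by omega), List.take_add, List.count_append, abs_le]
  push_cast
  constructor <;> linarith

theorem CyclBalanced.rotate (hw : CyclBalanced w) (a : ℕ) : CyclBalanced (w.rotate a) := fun k => by
  rw [List.rotate_rotate]
  exact hw _

theorem CyclBalanced.abs_prefixOnes_add_sub_sub_le_of_le {d l : ℕ} (hw : CyclBalanced w)
    (hl : l ≤ d) (hd : d ≤ w.length) :
    |(prefixOnes w (d + l) : ℤ) - prefixOnes w d - prefixOnes w l| ≤ 1 := by
  -- In `w.rotate d` the windows at `d` and at `0` of `w^∞` are those at `0` and at `w.length - d`.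
  have hrot := (hw d).abs_prefixOnes_add_sub_sub_le (d := w.length - d) (l := l) (by simp; omega)
  have h_window := prefixOnes_add w d l
  have h_tail := prefixOnes_add w d (w.length - d)
  have h_wrap := prefixOnes_add w d (w.length - d + l)
  rw [Nat.add_sub_of_le hd, prefixOnes_length] at h_tail
  rw [show d + (w.length - d + l) = l + w.length by omega, prefixOnes_add_length] at h_wrap
  rw [abs_le] at hrot ⊢
  omega

theorem CyclBalanced.abs_prefixOnes_add_sub_sub_le (hw : CyclBalanced w) (h0 : 0 < w.length)
    (d l : ℕ) : |(prefixOnes w (d + l) : ℤ) - prefixOnes w d - prefixOnes w l| ≤ 1 := by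
  wlog hdl : l % w.length ≤ d % w.length generalizing d l
  · rw [add_comm, sub_right_comm]
    exact this l d (by omega)
  have hred := hw.abs_prefixOnes_add_sub_sub_le_of_le hdl (Nat.mod_lt d h0).le
  have hperiod (i : ℕ) := prefixOnes_add_mul_length w (i % w.length) (i / w.length)
  have hsum := prefixOnes_add_mul_length w (d % w.length + l % w.length)
    (d / w.length + l / w.length)
  rw [show d % w.length + l % w.length + (d / w.length + l / w.length) * w.length = d + l by
    linarith [Nat.mod_add_div' d w.length, Nat.mod_add_div' l w.length]] at hsum
  simp only [Nat.mod_add_div'] at hperiod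
  rw [hsum, hperiod d, hperiod l]
  push_cast
  convert hred using 2
  ring

theorem CyclBalanced.abs_prefixOnes_mul_sub_le (hw : CyclBalanced w) (h0 : 0 < w.length)
    (l k : ℕ) : |(prefixOnes w ((k + 1) * l) : ℤ) - (k + 1) * prefixOnes w l| ≤ k := by
  induction k with
  | zero => simp
  | succ k ih =>
    have hstep := hw.abs_prefixOnes_add_sub_sub_le h0 ((k + 1) * l) l
    rw [← Nat.succ_mul] at hstep
    rw [abs_le] at *
    push_cast
    constructor <;> linarith

theorem CyclBalanced.abs_length_mul_prefixOnes_sub_lt (hw : CyclBalanced w) (h0 : 0 < w.length)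
    (l : ℕ) : |(w.length : ℤ) * prefixOnes w l - l * w.count true| < w.length := by
  have h := hw.abs_prefixOnes_mul_sub_le h0 l (w.length - 1)
  have hper := prefixOnes_add_mul_length w 0 l
  rw [zero_add, prefixOnes_zero, zero_add] at hper
  rw [Nat.sub_add_cancel h0, mul_comm _ l, hper, ← Nat.cast_add_one, Nat.sub_add_cancel h0,
    abs_sub_comm] at h
  push_cast at h
  omega

theorem CyclBalanced.prefixOnes_le_ceilDiv (hw : CyclBalanced w) (h0 : 0 < w.length) (l : ℕ) :
    prefixOnes w l ≤ (l * w.count true) ⌈/⌉ w.length := by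
  have hlt := (abs_lt.1 (hw.abs_length_mul_prefixOnes_sub_lt h0 l)).2
  have hceil : l * w.count true ≤ w.length * ((l * w.count true) ⌈/⌉ w.length) :=
    le_smul_ceilDiv h0
  zify at hceil
  refine Nat.lt_succ_iff.1 (Nat.lt_of_mul_lt_mul_left (a := w.length) ?_)
  zify
  linarith

theorem CyclBalanced.div_le_prefixOnes (hw : CyclBalanced w) (h0 : 0 < w.length) (l : ℕ) :
    l * w.count true / w.length ≤ prefixOnes w l := by
  have hlt := (abs_lt.1 (hw.abs_length_mul_prefixOnes_sub_lt h0 l)).1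
  rw [← Nat.lt_succ_iff, Nat.div_lt_iff_lt_mul h0]
  zify
  linarith

theorem IsFactor.exists_count_true_eq_prefixOnes {u : List Bool} (h : IsFactor u w) :
    ∃ a, u.count true = prefixOnes (w.rotate a) u.length := by
  obtain ⟨l, r, rfl⟩ := h
  refine ⟨l.length, ?_⟩
  rw [List.append_assoc, List.rotate_append_length_eq, List.append_assoc,
    prefixOnes_append_left le_rfl, prefixOnes_length]

end CyclBalanced

/-- The `i`-th letter of the mechanical word of slope `p / q` and intercept `c / q`: it is `1`
exactly when the line `y = (p x + c) / q` reaches a new integer height between `x = i` and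
`x = i + 1`. -/
def mechanicalLetter (p q c i : ℕ) : Bool := decide ((c + i * p) / q < (c + (i + 1) * p) / q)

/-- One period, of length `q`, of the mechanical word of slope `p / q` and intercept `c / q`. -/
def mechanicalWord (p q c : ℕ) : List Bool := (List.range q).map (mechanicalLetter p q c)

section Mechanical

variable {p q c : ℕ}

@[simp]
theorem length_mechanicalWord (p q c : ℕ) : (mechanicalWord p q c).length = q := by
  simp [mechanicalWord]

theorem mechanicalLetter_periodic (hq : 0 < q) : Function.Periodic (mechanicalLetter p q c) q :=
  fun i => by
    have hshift (k : ℕ) : (c + (k + q) * p) / q = (c + k * p) / q + p := by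
      rw [add_mul, ← add_assoc, Nat.add_mul_div_left _ _ hq]
    simp only [mechanicalLetter, add_right_comm i q 1, hshift, add_lt_add_iff_right]

theorem periodize_mechanicalWord (hq : 0 < q) (j : ℕ) :
    periodize (mechanicalWord p q c) j = mechanicalLetter p q c j := by
  rw [periodize, length_mechanicalWord, List.getD_eq_getElem _ _ (by simpa using Nat.mod_lt j hq)]
  simp [mechanicalWord, (mechanicalLetter_periodic hq).map_mod_nat]

theorem prefixOnes_mechanicalWord (hpq : p ≤ q) (hc : c < q) (i : ℕ) :
    prefixOnes (mechanicalWord p q c) i = (c + i * p) / q := by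
  have hq : 0 < q := by omega
  induction i with
  | zero => simp [Nat.div_eq_of_lt hc]
  | succ i ih =>
    have hle : (c + i * p) / q ≤ (c + (i + 1) * p) / q := Nat.div_le_div_right (by gcongr; simp)
    have hle_succ : (c + (i + 1) * p) / q ≤ (c + i * p) / q + 1 := by
      rw [← Nat.add_div_right _ hq]
      exact Nat.div_le_div_right (by linarith)
    rw [prefixOnes, Nat.count_succ, ← prefixOnes, ih, periodize_mechanicalWord hq]
    simp only [mechanicalLetter, decide_eq_true_iff]
    split_ifs <;> omega

theorem count_true_mechanicalWord (hpq : p ≤ q) (hc : c < q) :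
    (mechanicalWord p q c).count true = p := by
  rw [← prefixOnes_length, prefixOnes_mechanicalWord hpq hc, length_mechanicalWord,
    Nat.add_mul_div_left _ _ (by omega), Nat.div_eq_of_lt hc, zero_add]

theorem cyclBalanced_of_prefixOnes_eq {w : List Bool} (hq : 0 < q)
    (hw : ∀ i, prefixOnes w i = (c + i * p) / q) : CyclBalanced w := by
  have hwindow (a l : ℕ) : prefixOnes (w.rotate a) l = l * p / q ∨
      prefixOnes (w.rotate a) l = l * p / q + 1 := by
    have h := prefixOnes_add w a l
    rw [hw, hw, add_mul, ← add_assoc, Nat.add_div hq] at h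
    split_ifs at h <;> omega
  intro k u v hu hv hlen
  obtain ⟨a, ha⟩ := hu.exists_count_true_eq_prefixOnes
  obtain ⟨b, hb⟩ := hv.exists_count_true_eq_prefixOnes
  rw [List.rotate_rotate] at ha hb
  have hu_count := hwindow (k + a) u.length
  have hv_count := hwindow (k + b) v.length
  rw [← hlen] at hv_count hb
  omega

theorem cyclBalanced_mechanicalWord (hpq : p ≤ q) (hc : c < q) :
    CyclBalanced (mechanicalWord p q c) :=
  cyclBalanced_of_prefixOnes_eq (by omega) (prefixOnes_mechanicalWord hpq hc)

theorem prefixOnes_succ_mechanicalWord_lower (hpq : p < q) (k : ℕ) :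
    prefixOnes (mechanicalWord p q (q - p - 1)) (k + 1) = (k * p) ⌈/⌉ q := by
  rw [prefixOnes_mechanicalWord hpq.le (by omega), Nat.ceilDiv_eq_add_pred_div]
  congr 1
  rw [add_mul]
  omega

theorem prefixOnes_succ_mechanicalWord_upper (hp : 0 < p) (hpq : p ≤ q) (k : ℕ) :
    prefixOnes (mechanicalWord p q (q - p)) (k + 1) = k * p / q + 1 := by
  rw [prefixOnes_mechanicalWord hpq (by omega), ← Nat.add_div_right _ (by omega)]
  congr 1
  rw [add_mul]
  omega

end Mechanical

section ExtremalWords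

variable {p q : ℕ} {v w : List Bool}

theorem IsSWord.unique (hv : IsSWord p q v) (hw : IsSWord p q w) : v = w := by
  obtain ⟨hvlen, hvcount, hvbal, hvhead, hvmax⟩ := hv
  obtain ⟨hwlen, hwcount, hwbal, hwhead, hwmax⟩ := hw
  exact (hwmax v hvlen hvcount hvbal hvhead).antisymm (hvmax w hwlen hwcount hwbal hwhead)

theorem IsTWord.unique (hv : IsTWord p q v) (hw : IsTWord p q w) : v = w := by
  obtain ⟨hvlen, hvcount, hvbal, hvhead, hvmin⟩ := hv
  obtain ⟨hwlen, hwcount, hwbal, hwhead, hwmin⟩ := hw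
  exact (hvmin w hwlen hwcount hwbal hwhead).antisymm (hwmin v hvlen hvcount hvbal hvhead)

theorem IsSWord.lt (hw : IsSWord p q w) : p < q := by
  obtain ⟨rfl, rfl, -, hhead, -⟩ := hw
  obtain ⟨w, rfl⟩ := List.head?_eq_some_iff.1 hhead
  simpa [Nat.lt_succ_iff] using List.count_le_length

theorem isSWord_mechanicalWord (hpq : p < q) : IsSWord p q (mechanicalWord p q (q - p - 1)) := by
  have hq : 0 < q := by omega
  have hc : q - p - 1 < q := by omega
  refine ⟨length_mechanicalWord _ _ _, count_true_mechanicalWord hpq.le hc,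
    cyclBalanced_mechanicalWord hpq.le hc, head?_of_prefixOnes_one (by simpa) ?_,
    fun w hlen hcount hbal hhead => wordLe_of_prefixOnes_le (by simpa using hlen) ?_⟩
  · simp [prefixOnes_succ_mechanicalWord_lower hpq 0]
  rintro (_ | k) -
  · simp
  · rw [prefixOnes_succ_mechanicalWord_lower hpq, add_comm, prefixOnes_add,
      prefixOnes_one_of_head? hhead]
    simpa [hlen, hcount, (w.rotate_perm 1).count_eq] using
      (hbal.rotate 1).prefixOnes_le_ceilDiv (by simpa [hlen]) k

theorem isTWord_mechanicalWord (hp : 0 < p) (hpq : p ≤ q) :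
    IsTWord p q (mechanicalWord p q (q - p)) := by
  have hq : 0 < q := by omega
  have hc : q - p < q := by omega
  refine ⟨length_mechanicalWord _ _ _, count_true_mechanicalWord hpq hc,
    cyclBalanced_mechanicalWord hpq hc, head?_of_prefixOnes_one (by simpa) ?_,
    fun w hlen hcount hbal hhead => wordLe_of_prefixOnes_le (by simpa using hlen.symm) ?_⟩
  · simp [prefixOnes_succ_mechanicalWord_upper hp hpq 0]
  rintro (_ | k) -
  · simp
  · rw [prefixOnes_succ_mechanicalWord_upper hp hpq, add_comm k, prefixOnes_add,
      prefixOnes_one_of_head? hhead, add_comm, Bool.toNat_true, add_le_add_iff_left]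
    simpa [hlen, hcount, (w.rotate_perm 1).count_eq] using
      (hbal.rotate 1).div_le_prefixOnes (by simpa [hlen]) k

theorem isSWord_iff (hpq : p < q) :
    IsSWord p q w ↔ w.length = q ∧ ∀ k < q, prefixOnes w (k + 1) = (k * p) ⌈/⌉ q := by
  have hmech := isSWord_mechanicalWord hpq
  constructor
  · intro hw
    obtain rfl := hw.unique hmech
    exact ⟨hw.1, fun k _ => prefixOnes_succ_mechanicalWord_lower hpq k⟩
  · rintro ⟨hlen, hones⟩
    suffices w = mechanicalWord p q (q - p - 1) from this ▸ hmech
    refine eq_of_prefixOnes_eq (by simpa using hlen) fun i hi => ?_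
    cases i with
    | zero => simp
    | succ k => rw [hones k (by omega), prefixOnes_succ_mechanicalWord_lower hpq]

theorem isTWord_iff (hp : 0 < p) (hpq : p ≤ q) :
    IsTWord p q w ↔ w.length = q ∧ ∀ k < q, prefixOnes w (k + 1) = k * p / q + 1 := by
  have hmech := isTWord_mechanicalWord hp hpq
  constructor
  · intro hw
    obtain rfl := hw.unique hmech
    exact ⟨hw.1, fun k _ => prefixOnes_succ_mechanicalWord_upper hp hpq k⟩
  · rintro ⟨hlen, hones⟩
    suffices w = mechanicalWord p q (q - p) from this ▸ hmech
    refine eq_of_prefixOnes_eq (by simpa using hlen) fun i hi => ?_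
    cases i with
    | zero => simp
    | succ k => rw [hones k (by omega), prefixOnes_succ_mechanicalWord_upper hp hpq]

theorem IsSWord.exists_eq_cons_cons (hp : 0 < p) (hw : IsSWord p q w) :
    ∃ v, w = false :: true :: v := by
  have hpq := hw.lt
  have htwo : prefixOnes w (1 + 1) = 1 := by
    rw [((isSWord_iff hpq).1 hw).2 1 (by omega), one_mul, Nat.ceilDiv_eq_add_pred_div]
    exact Nat.div_eq_of_lt_le (by omega) (by omega)
  obtain ⟨hlen, -, -, hhead, -⟩ := hw
  obtain ⟨u, rfl⟩ := List.head?_eq_some_iff.1 hhead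
  obtain ⟨b, v, rfl⟩ : ∃ b v, u = b :: v := List.exists_cons_of_length_pos (by simp at hlen; omega)
  rw [prefixOnes_eq_count_take (by simp)] at htwo
  cases b <;> simp_all

theorem ceilDiv_eq_div_add_one {a : ℕ} (hq : 0 < q) (h : ¬q ∣ a) : a ⌈/⌉ q = a / q + 1 := by
  obtain ⟨b, rfl⟩ := Nat.exists_eq_succ_of_ne_zero (show a ≠ 0 by rintro rfl; simp at h)
  rw [Nat.ceilDiv_eq_add_pred_div, Nat.succ_div_of_not_dvd h, ← Nat.add_div_right _ hq]
  congr 1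
  omega

theorem IsSWord.isTWord_cons_cons (hp : 0 < p) (hpq : p.Coprime q)
    (hw : IsSWord p q (false :: true :: v)) : IsTWord p q (true :: false :: v) := by
  have hlt := hw.lt
  obtain ⟨hlen, hones⟩ := (isSWord_iff hlt).1 hw
  refine (isTWord_iff hp hlt.le).2 ⟨hlen, fun k hk => ?_⟩
  cases k with
  | zero => simp [prefixOnes_one_of_head?]
  | succ k =>
    have hndvd : ¬q ∣ (k + 1) * p := fun h =>
      Nat.not_dvd_of_pos_of_lt k.succ_pos hk (hpq.symm.dvd_of_dvd_mul_right h)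
    rw [← ceilDiv_eq_div_add_one (by omega) hndvd, ← hones _ hk,
      prefixOnes_eq_count_take (hlen ▸ hk), prefixOnes_eq_count_take (hlen ▸ hk)]
    simp

end ExtremalWords

section Farey

variable {p q p0 q0 : ℕ} {s t s0 : List Bool}

/-- No integer `m` satisfies `k p0 / q0 ≤ m < k p / q`, since the gap
`k p / q - k p0 / q0 = k / (q q0)` is less than `1 / q`. -/
theorem ceilDiv_eq_ceilDiv_of_farey (hq : 0 < q) (hfarey : p * q0 = p0 * q + 1) {k : ℕ}
    (hk : k < q0) : (k * p0) ⌈/⌉ q0 = (k * p) ⌈/⌉ q := by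
  refine eq_of_forall_ge_iff fun m => ?_
  rw [ceilDiv_le_iff_le_mul (by omega), ceilDiv_le_iff_le_mul hq]
  have hscaled : k * p * q0 = k * p0 * q + k := by linear_combination k * hfarey
  constructor <;> intro h
  · by_contra! hlt
    nlinarith
  · nlinarith

theorem coprime_of_farey (hfarey : p * q0 = p0 * q + 1) : p.Coprime q := by
  zify at hfarey
  exact Nat.isCoprime_iff_coprime.1 ⟨q0, -p0, by linear_combination hfarey⟩

theorem IsSWord.mediant (hfarey : p * q0 = p0 * q + 1) (hs : IsSWord p q s)
    (hs0 : IsSWord p0 q0 s0) : IsSWord (p + p0) (q + q0) (s ++ s0) := by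
  have hq : 0 < q := hs.lt.pos
  have hmediant {k : ℕ} (hk : k < q + q0) :
      (k * (p + p0)) ⌈/⌉ (q + q0) = (k * p) ⌈/⌉ q :=
    ceilDiv_eq_ceilDiv_of_farey hq (by linarith) hk
  obtain ⟨hslen, hsones⟩ := (isSWord_iff hs.lt).1 hs
  obtain ⟨hs0len, hs0ones⟩ := (isSWord_iff hs0.lt).1 hs0
  refine (isSWord_iff (add_lt_add hs.lt hs0.lt)).2 ⟨by simp [hslen, hs0len], fun k hk => ?_⟩
  rw [hmediant hk]
  rcases lt_or_ge k q with hkq | hqk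
  · rw [prefixOnes_append_left (by omega), hsones k hkq]
  · obtain ⟨j, rfl⟩ := Nat.exists_eq_add_of_le hqk
    rw [add_assoc, ← hslen, prefixOnes_append_right (by omega), hs0ones j (by omega),
      ceilDiv_eq_ceilDiv_of_farey hq hfarey (by omega), hs.2.1, hslen,
      Nat.ceilDiv_eq_add_pred_div, Nat.ceilDiv_eq_add_pred_div, ← Nat.mul_add_div hq]
    congr 1
    rw [add_mul]
    omega

theorem IsTWord.mediant (hfarey : p * q0 = p0 * q + 1) (ht : IsTWord p q t) (hs : IsSWord p q s)
    (hs0 : IsSWord p0 q0 s0) : IsTWord (p + p0) (q + q0) (t ++ s0) := by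
  have hp : 0 < p := Nat.pos_of_ne_zero (by rintro rfl; simp at hfarey)
  obtain ⟨v, rfl⟩ := hs.exists_eq_cons_cons hp
  obtain rfl := ht.unique (hs.isTWord_cons_cons hp (coprime_of_farey hfarey))
  have hfarey' : (p + p0) * q0 = p0 * (q + q0) + 1 := by linarith
  exact (hs.mediant hfarey hs0).isTWord_cons_cons (by omega) (coprime_of_farey hfarey')

theorem farey_mul_add (hfarey : p * q0 = p0 * q + 1) (n : ℕ) :
    p * (n * q + q0) = (n * p + p0) * q + 1 := by
  linear_combination hfarey

theorem IsSWord.flatten_replicate_append (hfarey : p * q0 = p0 * q + 1) (hs : IsSWord p q s)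
    (hs0 : IsSWord p0 q0 s0) (n : ℕ) :
    IsSWord (n * p + p0) (n * q + q0) ((List.replicate n s).flatten ++ s0) := by
  induction n with
  | zero => simpa using hs0
  | succ n ih =>
    rw [show (n + 1) * p + p0 = p + (n * p + p0) by ring,
      show (n + 1) * q + q0 = q + (n * q + q0) by ring,
      List.replicate_succ, List.flatten_cons, List.append_assoc]
    exact hs.mediant (farey_mul_add hfarey n) ih

theorem IsTWord.append_flatten_replicate_append (hfarey : p * q0 = p0 * q + 1)
    (ht : IsTWord p q t) (hs : IsSWord p q s) (hs0 : IsSWord p0 q0 s0) (n : ℕ) :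
    IsTWord ((n + 1) * p + p0) ((n + 1) * q + q0) (t ++ (List.replicate n s).flatten ++ s0) := by
  rw [show (n + 1) * p + p0 = p + (n * p + p0) by ring,
    show (n + 1) * q + q0 = q + (n * q + q0) by ring, List.append_assoc]
  exact ht.mediant (farey_mul_add hfarey n) hs (hs.flatten_replicate_append hfarey hs0 n)

end Farey

theorem stmt_14 (p q p0 q0 : ℕ) (hp : 0 < p) (hpq : p < q) (hp0 : p0 < q0)
    (hfarey : (p : ℤ) * q0 - (p0 : ℤ) * q = 1)
    (s t s0 : List Bool)
    (hs : IsSWord p q s) (ht : IsTWord p q t) (hs0 : IsSWord p0 q0 s0) :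
    (∀ n : ℕ, 1 ≤ n → ∀ sn : List Bool, IsSWord (n * p + p0) (n * q + q0) sn →
        sn = (List.replicate n s).flatten ++ s0) ∧
    (∀ n : ℕ, 1 ≤ n → ∀ tn : List Bool, IsTWord (n * p + p0) (n * q + q0) tn →
        tn = t ++ (List.replicate (n - 1) s).flatten ++ s0) ∧
    (∀ j : ℕ, ∃ N : ℕ, ∀ n ≥ N, ∀ sn : List Bool,
        IsSWord (n * p + p0) (n * q + q0) sn → periodize sn j = periodize s j) ∧
    (∀ j : ℕ, ∃ N : ℕ, ∀ n ≥ N, ∀ tn : List Bool,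
        IsTWord (n * p + p0) (n * q + q0) tn →
          periodize tn j = wordThenPeriodic t s j) := by
  have hfarey' : p * q0 = p0 * q + 1 := by zify; linarith
  have hs_length : 0 < s.length := by rw [hs.1]; omega
  have hS (n : ℕ) (sn : List Bool) (hsn : IsSWord (n * p + p0) (n * q + q0) sn) :
      sn = (List.replicate n s).flatten ++ s0 :=
    hsn.unique (hs.flatten_replicate_append hfarey' hs0 n)
  have hT (n : ℕ) (hn : 1 ≤ n) (tn : List Bool) (htn : IsTWord (n * p + p0) (n * q + q0) tn) :
      tn = t ++ (List.replicate (n - 1) s).flatten ++ s0 := by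
    obtain ⟨n, rfl⟩ := Nat.exists_eq_add_of_le' hn
    exact htn.unique (ht.append_flatten_replicate_append hfarey' hs hs0 n)
  refine ⟨fun n _ => hS n, hT, fun j => ⟨j + 1, fun n hn sn hsn => ?_⟩,
    fun j => ⟨j + 2, fun n hn tn htn => ?_⟩⟩
  · rw [hS n sn hsn]
    exact periodize_flatten_replicate_append (hn.trans (Nat.le_mul_of_pos_right n hs_length))
  · rw [hT n (by omega) tn htn]
    have hj : j < (n - 1) * s.length :=
      lt_of_lt_of_le (by omega) (Nat.le_mul_of_pos_right (n - 1) hs_length)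
    exact periodize_append_flatten_replicate_append (by omega)
end

section
/- Let r = p/q ∈ ℚ∩(0,1), s = s(r), t = t(r). Every infinite binary word that is a shift of an infinite concatenation of the blocks s and t corresponds under π to a point whose T-orbit is disjoint from the open interval (π(st^∞), π(ts^∞)). -/
noncomputable def T (x : ℝ) : ℝ := if x ≤ 1/2 then 2*x else 2*x - 1

/-- `π(w) = Σ_j w_j 2^{-j}`. -/
noncomputable def piW (w : ℕ → Bool) : ℝ :=
  ∑' j : ℕ, (if w j then (1:ℝ) else 0) / 2 ^ (j + 1)

/-- `w` is the infinite concatenation `a 0 ++ a 1 ++ a 2 ++ ⋯`. -/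
def IsConcat (a : ℕ → List Bool) (w : ℕ → Bool) : Prop :=
  ∀ n : ℕ, ∀ j < (((List.range n).map a).flatten).length,
    (((List.range n).map a).flatten).getD j false = w j

/-!
In a cyclically balanced word of length `q` with `p` ones, any two cyclic factors of length `n`
differ by at most one in their number of ones; averaging over all starting points, each of them has
fewer than `n p / q + 1` and more than `n p / q - 1` ones. Hence a prefix of length `n + 1` has at
most `⌈n p / q⌉` ones if the word begins with `0`, and at least `⌊n p / q⌋ + 1` if it begins with
`1`. Both bounds are the prefix counts of a cyclically balanced word, which must then be the
extremal word `s`, respectively `t`.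

The prefix counts of a concatenation of the blocks `s` and `t` lie between those of `s^∞` and of
`t^∞`. Subtracting two such counts, a shift that begins with `0` never has more ones in a prefix
than `s t^∞`, and a shift that begins with `1` never has fewer than `t s^∞`. By summation by parts
`π` is monotone in the prefix counts, and `T` acts as the shift because all shifts of the word
contain a one, so every point of the orbit lies on one side of the gap.
-/

/-- The number of ones among the first `n` letters of `f`; an integer, so that counts can be
subtracted. -/
def onesCount (f : ℕ → Bool) (n : ℕ) : ℤ := ∑ i ∈ Finset.range n, if f i then 1 else 0

/-- The number of ones in the factor of `f` of length `n` that starts at position `a`. -/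
def factorCount (f : ℕ → Bool) (a n : ℕ) : ℤ := onesCount (fun i => f (i + a)) n

/-- The prefix of length `n` of the infinite word `f`, as a finite word. -/
def prefixWord (f : ℕ → Bool) (n : ℕ) : List Bool := (List.range n).map f

section OnesCount

variable (f : ℕ → Bool)

@[simp]
theorem onesCount_zero : onesCount f 0 = 0 := rfl

theorem onesCount_succ (n : ℕ) :
    onesCount f (n + 1) = onesCount f n + if f n then 1 else 0 :=
  Finset.sum_range_succ _ n

theorem onesCount_succ' (n : ℕ) :
    onesCount f (n + 1) = factorCount f 1 n + if f 0 then 1 else 0 :=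
  Finset.sum_range_succ' _ n

theorem onesCount_add (a n : ℕ) : onesCount f (a + n) = onesCount f a + factorCount f a n := by
  simp only [onesCount, factorCount, Finset.sum_range_add, add_comm]

theorem count_true_prefixWord (n : ℕ) : ((prefixWord f n).count true : ℤ) = onesCount f n := by
  induction n with
  | zero => rfl
  | succ n ih =>
    rw [onesCount_succ, ← ih, prefixWord, List.range_succ, List.map_append, List.count_append]
    cases h : f n <;> simp [prefixWord, h]

variable {f}

theorem onesCount_congr {g : ℕ → Bool} {n : ℕ} (h : ∀ i < n, f i = g i) :
    onesCount f n = onesCount g n :=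
  Finset.sum_congr rfl fun i hi => by rw [h i (Finset.mem_range.1 hi)]

variable {q : ℕ}

theorem factorCount_add_period (hf : Function.Periodic f q) (a n : ℕ) :
    factorCount f (a + q) n = factorCount f a n := by
  simp only [factorCount, ← add_assoc, hf _]

theorem onesCount_add_period (hf : Function.Periodic f q) (n : ℕ) :
    onesCount f (n + q) = onesCount f n + onesCount f q := by
  have h := factorCount_add_period hf 0 n
  rw [zero_add] at h
  rw [add_comm, onesCount_add, h, add_comm]
  rfl

theorem factorCount_period (hf : Function.Periodic f q) (a : ℕ) :
    factorCount f a q = onesCount f q := by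
  linarith [onesCount_add f a q, onesCount_add_period hf a]

theorem sum_factorCount_period (hf : Function.Periodic f q) (a n : ℕ) :
    ∑ d ∈ Finset.range q, factorCount f (a + d) n = n * onesCount f q := by
  calc ∑ d ∈ Finset.range q, factorCount f (a + d) n
      = ∑ i ∈ Finset.range n, factorCount f (a + i) q := by
        simp only [factorCount, onesCount]
        rw [Finset.sum_comm]
        simp only [add_comm, add_left_comm]
    _ = n * onesCount f q := by simp [factorCount_period hf]

end OnesCount

section Periodize

variable (w : List Bool)

theorem periodic_periodize : Function.Periodic (periodize w) w.length := fun i => by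
  simp [periodize]

theorem periodize_eq_getElem {i : ℕ} (hi : i < w.length) : periodize w i = w[i] := by
  simp [periodize, Nat.mod_eq_of_lt hi, hi]

theorem prefixWord_periodize : prefixWord (periodize w) w.length = w :=
  List.ext_getElem (by simp [prefixWord]) fun i _ hi => by
    simp [prefixWord, periodize_eq_getElem w hi]

theorem onesCount_periodize_length : onesCount (periodize w) w.length = w.count true := by
  rw [← count_true_prefixWord, prefixWord_periodize]

theorem onesCount_periodize_mul_length (k : ℕ) :
    onesCount (periodize w) (k * w.length) = k * w.count true := by
  induction k with
  | zero => simp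
  | succ k ih =>
    rw [Nat.succ_mul, onesCount_add_period (periodic_periodize w), ih, onesCount_periodize_length]
    push_cast
    ring

theorem periodize_prefixWord {f : ℕ → Bool} {q : ℕ} (hf : Function.Periodic f q) (hq : 0 < q) :
    periodize (prefixWord f q) = f := by
  ext i
  simp [periodize, prefixWord, Nat.mod_lt i hq, hf.map_mod_nat]

theorem head?_eq_periodize_zero (hw : 0 < w.length) : w.head? = some (periodize w 0) := by
  rw [periodize_eq_getElem w hw, List.head?_eq_getElem?, List.getElem?_eq_getElem hw]

theorem getElem?_rotate_eq_periodize {k i : ℕ} (hi : i < w.length) :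
    (w.rotate k)[i]? = some (periodize w (i + k)) := by
  have hmod : (i + k) % w.length < w.length := Nat.mod_lt _ (by omega)
  rw [List.getElem?_rotate hi, periodize, List.getD_eq_getElem _ _ hmod,
    List.getElem?_eq_getElem hmod]

end Periodize

section Balanced

theorem isFactor_rotate_iff {u w : List Bool} {k : ℕ} :
    IsFactor u (w.rotate k) ↔ ∃ l, l + u.length ≤ w.length ∧
      u = prefixWord (fun i => periodize w (i + (k + l))) u.length := by
  have hsub : IsFactor u (w.rotate k) ↔ u <:+: w.rotate k := by
    simp only [IsFactor, List.IsInfix, eq_comm]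
  rw [hsub, List.infix_iff_getElem?, List.length_rotate]
  refine exists_congr fun l => ?_
  rw [add_comm l]
  refine and_congr_right fun hl => ?_
  rw [List.ext_getElem_iff]
  simp only [prefixWord, List.length_map, List.length_range, List.getElem_map, List.getElem_range,
    true_and]
  refine forall_congr' fun i => ⟨fun h hi _ => ?_, fun h hi => ?_⟩
  · have := h hi
    rw [getElem?_rotate_eq_periodize w (by omega), add_right_comm, add_assoc] at this
    simpa using this.symm
  · rw [getElem?_rotate_eq_periodize w (by omega), add_right_comm, add_assoc, h hi hi]

theorem cyclBalanced_iff_factorCount {w : List Bool} :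
    CyclBalanced w ↔ ∀ k l m n, l + n ≤ w.length → m + n ≤ w.length →
      factorCount (periodize w) (k + l) n - factorCount (periodize w) (k + m) n ≤ 1 := by
  constructor
  · intro h k l m n hl hm
    simpa [count_true_prefixWord, factorCount] using
      h k (prefixWord (fun i => periodize w (i + (k + l))) n)
        (prefixWord (fun i => periodize w (i + (k + m))) n)
        (isFactor_rotate_iff.2 ⟨l, by simpa [prefixWord] using hl, by simp [prefixWord]⟩)
        (isFactor_rotate_iff.2 ⟨m, by simpa [prefixWord] using hm, by simp [prefixWord]⟩)
        (by simp [prefixWord])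
  · intro h k u v hu hv huv
    obtain ⟨l, hl, hul⟩ := isFactor_rotate_iff.1 hu
    obtain ⟨m, hm, hvm⟩ := isFactor_rotate_iff.1 hv
    rw [hul, hvm, count_true_prefixWord, count_true_prefixWord, ← huv]
    exact h k l m u.length hl (huv ▸ hm)

-- Both differences equal the mixed second difference of the prefix counts.
theorem factorCount_sub_comm (f : ℕ → Bool) (a d n : ℕ) :
    factorCount f (a + d) n - factorCount f a n = factorCount f (a + n) d - factorCount f a d := by
  have h := onesCount_add f (a + d) n
  rw [add_right_comm] at h
  linarith [onesCount_add f (a + n) d, onesCount_add f a d, onesCount_add f a n]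

theorem CyclBalanced.abs_factorCount_sub_le {w : List Bool} (h : CyclBalanced w) (a : ℕ) {d n : ℕ}
    (hd : d ≤ w.length) (hn : n ≤ w.length) :
    |factorCount (periodize w) (a + d) n - factorCount (periodize w) a n| ≤ 1 := by
  wlog hnd : n ≤ d generalizing d n
  · rw [factorCount_sub_comm]
    exact this hn hd (le_of_not_ge hnd)
  -- The window of length `|w|` that starts at `a + d` contains both cyclic factors.
  have hfit : w.length - d + n ≤ w.length := by omega
  have hwrap : factorCount (periodize w) (a + d + (w.length - d)) n =
      factorCount (periodize w) a n := by
    rw [add_assoc, Nat.add_sub_cancel' hd, factorCount_add_period (periodic_periodize w)]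
  have hle := cyclBalanced_iff_factorCount.1 h (a + d) 0 _ n (by omega) hfit
  have hge := cyclBalanced_iff_factorCount.1 h (a + d) _ 0 n hfit (by omega)
  rw [hwrap, add_zero] at hle hge
  exact abs_le.2 ⟨by linarith, hle⟩

-- The factors of length `n` contain `n * α` ones on average, so none can be a full unit away.
theorem CyclBalanced.abs_factorCount_sub_mul_lt {w : List Bool} (h : CyclBalanced w) (a : ℕ)
    {n : ℕ} (hw : 0 < w.length) (hn : n ≤ w.length) :
    |(factorCount (periodize w) a n - n * (w.count true / w.length) : ℝ)| < 1 := by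
  set F := fun d => factorCount (periodize w) (a + d) n
  have hsum : ∑ d ∈ Finset.range w.length, (F 0 - F d) =
      w.length * factorCount (periodize w) a n - n * w.count true := by
    rw [Finset.sum_sub_distrib, sum_factorCount_period (periodic_periodize w),
      onesCount_periodize_length]
    simp [F]
  have hlt : |∑ d ∈ Finset.range w.length, (F 0 - F d)| < w.length := calc
    _ ≤ ∑ d ∈ Finset.range w.length, |F 0 - F d| := Finset.abs_sum_le_sum_abs _ _
    _ < ∑ d ∈ Finset.range w.length, 1 := by
      refine Finset.sum_lt_sum (fun d hd => ?_) ⟨0, by simpa using hw, by simp⟩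
      rw [abs_sub_comm]
      exact h.abs_factorCount_sub_le a (Finset.mem_range.1 hd).le hn
    _ = w.length := by simp
  have hw' : (0 : ℝ) < w.length := by exact_mod_cast hw
  rw [hsum] at hlt
  refine lt_of_mul_lt_mul_left ?_ hw'.le
  calc (w.length : ℝ) * |(factorCount (periodize w) a n - n * (w.count true / w.length) : ℝ)|
      = |(w.length * factorCount (periodize w) a n - n * w.count true : ℝ)| := by
        rw [← abs_of_pos hw', ← abs_mul, abs_of_pos hw']
        congr 1
        field_simp
    _ < w.length * 1 := by rw [mul_one]; exact_mod_cast hlt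

end Balanced

section UnitDiscrepancy

/-- The sequence `c` grows linearly with slope `α` up to an error whose oscillation is less than
one; the prefix counts of balanced words with frequency of ones `α` are of this kind. -/
def HasUnitDiscrepancy (c : ℕ → ℤ) (α : ℝ) : Prop :=
  ∀ i j : ℕ, (c i - i * α) - (c j - j * α) < 1

/-- The word whose prefix counts are `c`, when `c` starts at `0` and has increments `0` and `1`. -/
def incrementWord (c : ℕ → ℤ) (n : ℕ) : Bool := decide (c n < c (n + 1))

variable {c : ℕ → ℤ} {α : ℝ}

theorem HasUnitDiscrepancy.succ_sub_mem_Icc (h : HasUnitDiscrepancy c α) (hα0 : 0 ≤ α)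
    (hα1 : α ≤ 1) (n : ℕ) : c (n + 1) - c n ∈ Set.Icc 0 1 := by
  have hup := h (n + 1) n
  have hdown := h n (n + 1)
  push_cast at hup hdown
  have hlt : (c (n + 1) : ℝ) < c n + 2 := by linarith
  have hgt : (c n : ℝ) < c (n + 1) + 1 := by linarith
  norm_cast at hlt hgt
  constructor <;> omega

theorem HasUnitDiscrepancy.onesCount_incrementWord (h : HasUnitDiscrepancy c α) (hα0 : 0 ≤ α)
    (hα1 : α ≤ 1) (hc : c 0 = 0) : onesCount (incrementWord c) = c := by
  ext n
  induction n with
  | zero => simp [hc]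
  | succ n ih =>
    obtain ⟨hge, hle⟩ := h.succ_sub_mem_Icc hα0 hα1 n
    rw [onesCount_succ, ih, incrementWord]
    split_ifs with hlt <;> simp only [decide_eq_true_eq] at hlt <;> omega

theorem HasUnitDiscrepancy.apply_add_period {p q : ℕ} (h : HasUnitDiscrepancy c (p / q))
    (hq : 0 < q) (n : ℕ) : c (n + q) = c n + p := by
  have hslope : (q : ℝ) * (p / q) = p := by field_simp
  have hup := h (n + q) n
  have hdown := h n (n + q)
  push_cast at hup hdown
  rw [add_mul, hslope] at hup hdown
  have hlt : (c (n + q) : ℝ) < c n + p + 1 := by linarith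
  have hgt : (c n + p : ℝ) < c (n + q) + 1 := by linarith
  norm_cast at hlt hgt
  omega

theorem HasUnitDiscrepancy.exists_cyclBalanced {p q : ℕ} (h : HasUnitDiscrepancy c (p / q))
    (hq : 0 < q) (hpq : p ≤ q) (hc : c 0 = 0) :
    ∃ w : List Bool, w.length = q ∧ w.count true = p ∧ CyclBalanced w ∧
      onesCount (periodize w) = c := by
  have hcount : onesCount (incrementWord c) = c := h.onesCount_incrementWord (by positivity)
    (div_le_one_of_le₀ (by exact_mod_cast hpq) (by positivity)) hc
  have hper : Function.Periodic (incrementWord c) q := fun n => by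
    simp only [incrementWord, add_right_comm n q 1, h.apply_add_period hq, add_lt_add_iff_right]
  have hword : periodize (prefixWord (incrementWord c) q) = incrementWord c :=
    periodize_prefixWord hper hq
  refine ⟨prefixWord (incrementWord c) q, by simp [prefixWord], ?_, ?_, by rw [hword, hcount]⟩
  · have hcq := h.apply_add_period hq 0
    rw [zero_add, hc, zero_add, ← hcount, ← count_true_prefixWord] at hcq
    exact_mod_cast hcq
  · refine cyclBalanced_iff_factorCount.2 fun k l m n _ _ => ?_
    have hl := onesCount_add (incrementWord c) (k + l) n
    have hm := onesCount_add (incrementWord c) (k + m) n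
    have hend := h (k + l + n) (k + m + n)
    have hstart := h (k + m) (k + l)
    rw [hcount] at hl hm
    push_cast at hend hstart
    have hlt : (c (k + l + n) - c (k + l) - (c (k + m + n) - c (k + m)) : ℝ) < 2 := by linarith
    norm_cast at hlt
    rw [hword]
    omega

end UnitDiscrepancy

section ExtremalCounts

/-- The prefix counts of the periodic word `s^∞` when `α = p / q`; the value at `n = 0` is `0` when
`0 ≤ α < 1`. -/
noncomputable def lowerCount (α : ℝ) (n : ℕ) : ℤ := ⌈((n : ℝ) - 1) * α⌉

/-- The prefix counts of the periodic word `t^∞` when `α = p / q`; the value at `n = 0` is `0` when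
`0 < α ≤ 1`. -/
noncomputable def upperCount (α : ℝ) (n : ℕ) : ℤ := ⌊((n : ℝ) - 1) * α⌋ + 1

variable {α : ℝ}

theorem lowerCount_zero (hα0 : 0 ≤ α) (hα1 : α < 1) : lowerCount α 0 = 0 := by
  simp [lowerCount, hα0, hα1]

theorem upperCount_zero (hα0 : 0 < α) (hα1 : α ≤ 1) : upperCount α 0 = 0 := by
  have h : ⌊-α⌋ = -1 := Int.floor_eq_iff.2 ⟨by push_cast; linarith, by push_cast; linarith⟩
  simp [upperCount, h]

theorem lowerCount_succ (α : ℝ) (n : ℕ) : lowerCount α (n + 1) = ⌈n * α⌉ := by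
  simp [lowerCount]

theorem upperCount_succ (α : ℝ) (n : ℕ) : upperCount α (n + 1) = ⌊n * α⌋ + 1 := by
  simp [upperCount]

theorem lowerCount_le_upperCount (α : ℝ) (n : ℕ) : lowerCount α n ≤ upperCount α n :=
  Int.ceil_le_floor_add_one _

theorem hasUnitDiscrepancy_lowerCount (α : ℝ) : HasUnitDiscrepancy (lowerCount α) α := by
  intro i j
  simp only [lowerCount]
  linarith [Int.ceil_lt_add_one (((i : ℝ) - 1) * α), Int.le_ceil (((j : ℝ) - 1) * α)]

theorem hasUnitDiscrepancy_upperCount (α : ℝ) : HasUnitDiscrepancy (upperCount α) α := by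
  intro i j
  simp only [upperCount, Int.cast_add, Int.cast_one]
  linarith [Int.floor_le (((i : ℝ) - 1) * α), Int.lt_floor_add_one (((j : ℝ) - 1) * α)]

theorem lowerCount_eq_upperCount {p q n : ℕ} (hco : Nat.Coprime p q) (h1 : 1 < n) (hn : n ≤ q) :
    lowerCount (p / q) n = upperCount (p / q) n := by
  obtain ⟨m, rfl⟩ := Nat.exists_eq_add_of_le' h1.le
  rw [lowerCount_succ, upperCount_succ, Int.ceil_eq_floor_add_one_iff_notMem]
  rintro ⟨z, hz⟩
  have hq : (q : ℝ) ≠ 0 := by exact_mod_cast (by omega : q ≠ 0)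
  have hmul : (m * p : ℤ) = z * q := by
    field_simp at hz
    exact_mod_cast hz.symm
  have hdvd : q ∣ m * p := Int.natCast_dvd_natCast.1 ⟨z, by rw [mul_comm _ z]; exact_mod_cast hmul⟩
  exact absurd (Nat.le_of_dvd (by omega) (hco.symm.dvd_of_dvd_mul_right hdvd)) (by omega)

end ExtremalCounts

section ExtremalWords

theorem WordLe.eq_of_onesCount_le {u v : List Bool} (h : WordLe u v) (hlen : u.length = v.length)
    (hcount : ∀ n ≤ u.length, onesCount (periodize v) n ≤ onesCount (periodize u) n) : u = v := by
  refine h.resolve_right fun hlt => ?_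
  rcases List.lt_iff_exists.1 hlt with ⟨-, hshort⟩ | ⟨i, hu, hv, heq, hi⟩
  · omega
  have hcommon : onesCount (periodize u) i = onesCount (periodize v) i :=
    onesCount_congr fun j hj => by
      rw [periodize_eq_getElem u (hj.trans hu), periodize_eq_getElem v (hj.trans hv), heq j hj]
  have hle := hcount (i + 1) hu
  obtain ⟨hui, hvi⟩ := Bool.lt_iff.1 hi
  rw [onesCount_succ, onesCount_succ, hcommon, periodize_eq_getElem u hu,
    periodize_eq_getElem v hv, hui, hvi] at hle
  simp at hle

theorem CyclBalanced.onesCount_le_lowerCount {w : List Bool} (h : CyclBalanced w)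
    (hhead : w.head? = some false) {n : ℕ} (hn : n + 1 ≤ w.length) :
    onesCount (periodize w) (n + 1) ≤ lowerCount (w.count true / w.length) (n + 1) := by
  have hw : 0 < w.length := by omega
  have h0 : periodize w 0 = false := by simpa [head?_eq_periodize_zero w hw] using hhead
  have hlt := (abs_lt.1 (h.abs_factorCount_sub_mul_lt 1 hw (by omega : n ≤ w.length))).2
  rw [onesCount_succ', h0, lowerCount_succ, Int.le_ceil_iff]
  simp only [Bool.false_eq_true, if_false, add_zero]
  linarith

theorem CyclBalanced.upperCount_le_onesCount {w : List Bool} (h : CyclBalanced w)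
    (hhead : w.head? = some true) {n : ℕ} (hn : n + 1 ≤ w.length) :
    upperCount (w.count true / w.length) (n + 1) ≤ onesCount (periodize w) (n + 1) := by
  have hw : 0 < w.length := by omega
  have h1 : periodize w 0 = true := by simpa [head?_eq_periodize_zero w hw] using hhead
  have hlt := (abs_lt.1 (h.abs_factorCount_sub_mul_lt 1 hw (by omega : n ≤ w.length))).1
  rw [onesCount_succ', h1, upperCount_succ, if_pos rfl, add_le_add_iff_right, Int.floor_le_iff]
  linarith

variable {p q : ℕ}

theorem IsSWord.onesCount_periodize (hpq : p < q) {s : List Bool} (hs : IsSWord p q s) :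
    onesCount (periodize s) = lowerCount (p / q) := by
  obtain ⟨hlen, hcount, hbal, hhead, hmax⟩ := hs
  have hα : (p / q : ℝ) < 1 := by
    rw [div_lt_one (by exact_mod_cast (by omega : 0 < q))]
    exact_mod_cast hpq
  obtain ⟨w, hwlen, hwcount, hwbal, hw⟩ :=
    (hasUnitDiscrepancy_lowerCount (p / q)).exists_cyclBalanced (by omega) hpq.le
      (lowerCount_zero (by positivity) hα)
  have hwhead : w.head? = some false := by
    have h1 : onesCount (periodize w) 1 = 0 := by simp [hw, lowerCount]
    rw [head?_eq_periodize_zero w (by omega)]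
    simpa [onesCount_succ] using h1
  have hws : w = s := by
    refine (hmax w hwlen hwcount hwbal hwhead).eq_of_onesCount_le (by omega) fun n hn => ?_
    cases n with
    | zero => simp
    | succ n =>
      rw [hw, ← hcount, ← hlen]
      exact hbal.onesCount_le_lowerCount hhead (by omega)
  rw [← hws, hw]

theorem IsTWord.onesCount_periodize (hp : 0 < p) (hpq : p ≤ q) {t : List Bool}
    (ht : IsTWord p q t) : onesCount (periodize t) = upperCount (p / q) := by
  obtain ⟨hlen, hcount, hbal, hhead, hmin⟩ := ht
  have hq : 0 < q := by omega
  have hα : (p / q : ℝ) ≤ 1 := div_le_one_of_le₀ (by exact_mod_cast hpq) (by positivity)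
  obtain ⟨w, hwlen, hwcount, hwbal, hw⟩ :=
    (hasUnitDiscrepancy_upperCount (p / q)).exists_cyclBalanced hq hpq
      (upperCount_zero (by positivity) hα)
  have hwhead : w.head? = some true := by
    have h1 : onesCount (periodize w) 1 = 1 := by simp [hw, upperCount]
    rw [head?_eq_periodize_zero w (by omega)]
    simpa [onesCount_succ] using h1
  have htw : t = w := by
    refine (hmin w hwlen hwcount hwbal hwhead).eq_of_onesCount_le (by omega) fun n hn => ?_
    cases n with
    | zero => simp
    | succ n =>
      rw [hw, ← hcount, ← hlen]
      exact hbal.upperCount_le_onesCount hhead (by omega)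
  rw [htw, hw]

end ExtremalWords

section Concatenation

variable {p q : ℕ} {a : ℕ → List Bool}

-- At multiples of `q` the prefix counts of all blocks agree, so the block may be switched there.
theorem onesCount_blocks (hlen : ∀ i, (a i).length = q) (hcount : ∀ i, (a i).count true = p)
    (n : ℕ) :
    onesCount (fun j => periodize (a (j / q)) j) n = onesCount (periodize (a (n / q))) n := by
  induction n with
  | zero => rfl
  | succ n ih =>
    rw [onesCount_succ, ih, ← onesCount_succ]
    by_cases hdvd : q ∣ n + 1
    · obtain ⟨k, hk⟩ := hdvd
      have hblock (i : ℕ) : onesCount (periodize (a i)) (n + 1) = k * p := by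
        rw [hk, mul_comm, ← hlen i, onesCount_periodize_mul_length, hcount i]
      rw [hblock, hblock]
    · rw [Nat.succ_div_of_not_dvd hdvd]

theorem length_flatten_map_range (hlen : ∀ i, (a i).length = q) (n : ℕ) :
    (((List.range n).map a).flatten).length = n * q := by
  simp [List.length_flatten, Function.comp_def, hlen]

theorem IsConcat.eq_periodize {w : ℕ → Bool} (hw : IsConcat a w) (hq : 0 < q)
    (hlen : ∀ i, (a i).length = q) : w = fun j => periodize (a (j / q)) j := by
  ext j
  have hj : j < (j / q + 1) * q := by rw [mul_comm]; exact Nat.lt_mul_div_succ j hq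
  have hmod : j - j / q * q = j % q := by rw [mul_comm, Nat.mod_eq_sub_mul_div]
  rw [← hw (j / q + 1) j (by rwa [length_flatten_map_range hlen]), List.range_succ,
    List.map_append, List.flatten_append, List.getD_append_right _ _ _ _
      (by rw [length_flatten_map_range hlen]; exact Nat.div_mul_le_self j q),
    length_flatten_map_range hlen, hmod, periodize, hlen]
  simp

theorem wordThenPeriodic_eq_periodize {u v : List Bool} (hq : 0 < q) (hu : u.length = q)
    (hv : v.length = q) :
    wordThenPeriodic u v = fun j => periodize (if j / q = 0 then u else v) j := by
  ext j
  simp only [wordThenPeriodic, hu, Nat.div_eq_zero_iff_lt hq]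
  split_ifs with hj
  · rw [periodize, hu, Nat.mod_eq_of_lt hj]
  · have hshift := periodic_periodize v (j - q)
    rw [hv, Nat.sub_add_cancel (by omega)] at hshift
    exact hshift.symm

theorem onesCount_wordThenPeriodic {u v : List Bool} (hq : 0 < q) (hu : u.length = q)
    (hv : v.length = q) (hup : u.count true = p) (hvp : v.count true = p) (n : ℕ) :
    onesCount (wordThenPeriodic u v) n = onesCount (periodize (if n < q then u else v)) n := by
  rw [wordThenPeriodic_eq_periodize hq hu hv,
    onesCount_blocks (a := fun i => if i = 0 then u else v) (p := p)
      (fun i => by split_ifs <;> assumption) (fun i => by split_ifs <;> assumption)]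
  simp only [Nat.div_eq_zero_iff_lt hq]

end Concatenation

section Sandwich

theorem floor_add_le_ceil_add_floor (x y : ℝ) : ⌊x + y⌋ ≤ ⌈x⌉ + ⌊y⌋ := by
  rw [← Int.floor_intCast_add]
  exact Int.floor_mono (by linarith [Int.le_ceil x])

theorem floor_add_ceil_le_ceil_add (x y : ℝ) : ⌊x⌋ + ⌈y⌉ ≤ ⌈x + y⌉ := by
  rw [← Int.ceil_intCast_add]
  exact Int.ceil_mono (by linarith [Int.floor_le x])

variable {α : ℝ} {f g : ℕ → Bool}

theorem factorCount_le_onesCount_of_eq_false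
    (hf : ∀ n, onesCount f n ∈ Set.Icc (lowerCount α n) (upperCount α n))
    (hg : ∀ n > 1, onesCount g n = upperCount α n) {m : ℕ} (hm : f m = false) (n : ℕ) :
    factorCount f m n ≤ onesCount g n := by
  rcases n with _ | _ | n
  · exact le_rfl
  · have hfirst : factorCount f m 1 = 0 := by simp [factorCount, onesCount_succ, hm]
    rw [zero_add, hfirst, onesCount]
    positivity
  · have hsplit := onesCount_add f m (n + 1 + 1)
    have hstart := (hf (m + 1)).1
    have hend := (hf (m + (n + 1) + 1)).2
    have hskip : onesCount f (m + 1) = onesCount f m := by simp [onesCount_succ, hm]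
    have hfloor := floor_add_le_ceil_add_floor (m * α) ((n + 1 : ℕ) * α)
    rw [← add_mul, ← Nat.cast_add] at hfloor
    rw [← add_assoc] at hsplit
    rw [lowerCount_succ] at hstart
    rw [upperCount_succ] at hend
    rw [hg _ (by omega), upperCount_succ]
    linarith

theorem onesCount_le_factorCount_of_eq_true
    (hf : ∀ n, onesCount f n ∈ Set.Icc (lowerCount α n) (upperCount α n))
    (hg : ∀ n > 1, onesCount g n = lowerCount α n) {m : ℕ} (hm : f m = true) (n : ℕ) :
    onesCount g n ≤ factorCount f m n := by
  rcases n with _ | _ | n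
  · exact le_rfl
  · have hfirst : factorCount f m 1 = 1 := by simp [factorCount, onesCount_succ, hm]
    rw [zero_add, hfirst, onesCount_succ, onesCount_zero]
    split_ifs <;> simp
  · have hsplit := onesCount_add f m (n + 1 + 1)
    have hstart := (hf (m + 1)).2
    have hend := (hf (m + (n + 1) + 1)).1
    have hskip : onesCount f (m + 1) = onesCount f m + 1 := by simp [onesCount_succ, hm]
    have hceil := floor_add_ceil_le_ceil_add (m * α) ((n + 1 : ℕ) * α)
    rw [← add_mul, ← Nat.cast_add] at hceil
    rw [← add_assoc] at hsplit
    rw [upperCount_succ] at hstart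
    rw [lowerCount_succ] at hend
    rw [hg _ (by omega), lowerCount_succ]
    linarith

theorem exists_eq_true_of_lowerCount_le (hα : 0 < α) (hf : ∀ n, lowerCount α n ≤ onesCount f n)
    (m : ℕ) : ∃ j, f (j + m) = true := by
  by_contra! hfalse
  have hconst (n : ℕ) : onesCount f (m + n) = onesCount f m := by
    have hzero : factorCount f m n = 0 := by simp [factorCount, onesCount, hfalse]
    rw [onesCount_add, hzero, add_zero]
  obtain ⟨n, hn⟩ := exists_nat_gt ((onesCount f m : ℝ) / α)
  rw [div_lt_iff₀ hα] at hn
  have hlower := hf (m + n + 1)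
  rw [lowerCount_succ, add_assoc, hconst, Int.ceil_le] at hlower
  push_cast at hlower
  nlinarith [mul_nonneg m.cast_nonneg hα.le]

end Sandwich

section BinaryExpansion

variable {f g : ℕ → Bool}

theorem ofDigitsTerm_ite (f : ℕ → Bool) (j : ℕ) :
    Real.ofDigitsTerm (fun j => (if f j then 1 else 0 : Fin 2)) j =
      (if f j then (1 : ℝ) else 0) / 2 ^ (j + 1) := by
  cases h : f j <;> simp [Real.ofDigitsTerm, h]

theorem piW_eq_ofDigits (f : ℕ → Bool) :
    piW f = Real.ofDigits fun j => (if f j then 1 else 0 : Fin 2) := by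
  simp only [piW, Real.ofDigits, ofDigitsTerm_ite]

theorem hasSum_piW (f : ℕ → Bool) :
    HasSum (fun j : ℕ => (if f j then (1 : ℝ) else 0) / 2 ^ (j + 1)) (piW f) := by
  rw [← funext (ofDigitsTerm_ite f), piW_eq_ofDigits]
  exact Real.summable_ofDigitsTerm.hasSum

theorem piW_le_one (f : ℕ → Bool) : piW f ≤ 1 := by
  rw [piW_eq_ofDigits]
  exact Real.ofDigits_le_one _

theorem piW_pos (h : ∃ j, f j = true) : 0 < piW f := by
  obtain ⟨j, hj⟩ := h
  exact (hasSum_piW f).summable.tsum_pos (fun i => by positivity) j (by simp [hj])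

theorem piW_eq_head_add (f : ℕ → Bool) :
    piW f = (if f 0 then 1 else 0) / 2 + piW (fun j => f (j + 1)) / 2 := by
  rw [piW, (hasSum_piW f).summable.tsum_eq_zero_add, piW, ← tsum_div_const]
  simp only [zero_add, pow_one, div_div, ← pow_succ]

theorem sum_range_eq_onesCount (f : ℕ → Bool) (N : ℕ) :
    ∑ j ∈ Finset.range N, (if f j then (1 : ℝ) else 0) / 2 ^ (j + 1) =
      onesCount f N / 2 ^ N + ∑ n ∈ Finset.range N, (onesCount f n : ℝ) / 2 ^ (n + 1) := by
  induction N with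
  | zero => simp
  | succ N ih =>
    rw [Finset.sum_range_succ, ih, Finset.sum_range_succ, onesCount_succ]
    push_cast
    field_simp
    ring

theorem piW_le_of_onesCount_le (h : ∀ n, onesCount f n ≤ onesCount g n) : piW f ≤ piW g := by
  refine le_of_tendsto_of_tendsto' (hasSum_piW f).tendsto_sum_nat
    (hasSum_piW g).tendsto_sum_nat fun N => ?_
  rw [sum_range_eq_onesCount, sum_range_eq_onesCount]
  gcongr <;> apply h

theorem T_piW (h : ∃ j, f (j + 1) = true) : T (piW f) = piW fun j => f (j + 1) := by
  have hpos := piW_pos h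
  have hle := piW_le_one fun j => f (j + 1)
  rw [piW_eq_head_add f, T]
  cases f 0
  · simp only [Bool.false_eq_true, if_false]
    rw [if_pos (by linarith)]
    ring
  · simp only [if_true]
    rw [if_neg (by linarith)]
    ring

theorem T_iterate_piW (h : ∀ m, ∃ j, f (j + m) = true) (n : ℕ) :
    T^[n] (piW f) = piW fun j => f (j + n) := by
  induction n with
  | zero => rfl
  | succ n ih =>
    have hshift : (fun j => f (j + (n + 1))) = fun j => f (j + 1 + n) := by
      simp only [add_comm n 1, add_assoc]
    rw [Function.iterate_succ_apply', ih, hshift]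
    exact T_piW (by simpa only [add_comm n 1, add_assoc] using h (n + 1))

end BinaryExpansion

section GapEndpoints

variable {p q : ℕ} {s t : List Bool}

theorem IsSWord.onesCount_wordThenPeriodic (hco : Nat.Coprime p q) (hp : 0 < p) (hpq : p < q)
    (hs : IsSWord p q s) (ht : IsTWord p q t) {n : ℕ} (hn : 1 < n) :
    onesCount (wordThenPeriodic s t) n = upperCount (p / q) n := by
  rw [_root_.onesCount_wordThenPeriodic (by omega) hs.1 ht.1 hs.2.1 ht.2.1]
  split_ifs with hnq
  · rw [hs.onesCount_periodize hpq, lowerCount_eq_upperCount hco hn hnq.le]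
  · rw [ht.onesCount_periodize hp hpq.le]

theorem IsTWord.onesCount_wordThenPeriodic (hco : Nat.Coprime p q) (hp : 0 < p) (hpq : p < q)
    (ht : IsTWord p q t) (hs : IsSWord p q s) {n : ℕ} (hn : 1 < n) :
    onesCount (wordThenPeriodic t s) n = lowerCount (p / q) n := by
  rw [_root_.onesCount_wordThenPeriodic (by omega) ht.1 hs.1 ht.2.1 hs.2.1]
  split_ifs with hnq
  · rw [ht.onesCount_periodize hp hpq.le, lowerCount_eq_upperCount hco hn hnq.le]
  · rw [hs.onesCount_periodize hpq]

theorem IsConcat.onesCount_mem_Icc (hp : 0 < p) (hpq : p < q) (hs : IsSWord p q s)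
    (ht : IsTWord p q t) {a : ℕ → List Bool} (ha : ∀ i, a i = s ∨ a i = t) {w : ℕ → Bool}
    (hw : IsConcat a w) (n : ℕ) :
    onesCount w n ∈ Set.Icc (lowerCount (p / q) n) (upperCount (p / q) n) := by
  have hlen (i : ℕ) : (a i).length = q := by
    rcases ha i with h | h <;> rw [h]
    exacts [hs.1, ht.1]
  have hcount (i : ℕ) : (a i).count true = p := by
    rcases ha i with h | h <;> rw [h]
    exacts [hs.2.1, ht.2.1]
  have hle := lowerCount_le_upperCount (p / q) n
  rw [hw.eq_periodize (by omega) hlen, onesCount_blocks hlen hcount]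
  rcases ha (n / q) with h | h <;> rw [h]
  · rw [hs.onesCount_periodize hpq]
    exact ⟨le_rfl, hle⟩
  · rw [ht.onesCount_periodize hp hpq.le]
    exact ⟨hle, le_rfl⟩

end GapEndpoints

theorem stmt_16 (p q : ℕ) (hp : 0 < p) (hpq : p < q) (hco : Nat.Coprime p q)
    (s t : List Bool) (hs : IsSWord p q s) (ht : IsTWord p q t)
    (a : ℕ → List Bool) (ha : ∀ i, a i = s ∨ a i = t)
    (w0 : ℕ → Bool) (hw0 : IsConcat a w0) (k : ℕ) :
    ∀ n : ℕ, T^[n] (piW (fun j => w0 (j + k))) ∉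
      Set.Ioo (piW (wordThenPeriodic s t)) (piW (wordThenPeriodic t s)) := by
  intro n
  have hα : (0 : ℝ) < p / q := by
    have hq : 0 < q := by omega
    positivity
  have hcounts := hw0.onesCount_mem_Icc hp hpq hs ht ha
  have hones (m : ℕ) : ∃ j, w0 (j + m + k) = true := by
    simpa only [add_assoc] using
      exists_eq_true_of_lowerCount_le hα (fun n => (hcounts n).1) (m + k)
  rw [T_iterate_piW hones]
  simp only [add_assoc]
  rintro ⟨hgt, hlt⟩
  cases hhead : w0 (n + k)
  · exact hgt.not_ge <| piW_le_of_onesCount_le <| factorCount_le_onesCount_of_eq_false hcounts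
      (fun _ => hs.onesCount_wordThenPeriodic hco hp hpq ht) hhead
  · exact hlt.not_ge <| piW_le_of_onesCount_le <| onesCount_le_factorCount_of_eq_true hcounts
      (fun _ => ht.onesCount_wordThenPeriodic hco hp hpq hs) hhead
end
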